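/- For the BB(1̄, 1̄, 3, 3̄) code, with f = 1 + x + x^{-1} y^{-3} and g = 1 + y + y^{-1} x³ in R, the anyon periods are ℓ₀ = m₀ = 762: the least positive integer n with x^{n} − 1 ∈ Ideal.span {f, g} is 762, and the least positive integer n with y^{n} − 1 ∈ Ideal.span {f, g} is 762. -/

import Mathlib

noncomputable section

/-- The Laurent polynomial ring `F₂[x^±, y^±]` as a group algebra. -/
abbrev LaurentR : Type := AddMonoidAlgebra (ZMod 2) (ℤ × ℤ)

/-- The monomial `x^i y^j`. -/
def mono (i j : ℤ) : LaurentR := AddMonoidAlgebra.single (i, j) 1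

/-!
At a common zero `(x, y)` of `f` and `g` in an `𝔽₂`-algebra, `x`, `y`, `x - 1` and `y - 1` are all
units. Since `x - 1` is a unit and `6`, `127` are coprime, `x⁶ - 1` and `x¹²⁷ - 1` are comaximal, so
`x⁷⁶² = 1` follows once their product vanishes; likewise for `y`. Put `q = 1 + x² + x⁴`, which is
`(1 + x + x²)²`. It divides both `x⁶ - 1` and `1 + y² + y⁴`, hence also `y⁶ - 1`, and it annihilates
`y⁷ - x²` and `x¹⁷y⁴ - 1`. The exponent lattice of these two monomial relations has index `127`, so
`q` annihilates `x¹²⁷ - 1` and `y¹²⁷ - 1` as well.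

Conversely, there is a zero with `q = 0` and `1 + x + x²` a nonzero nilpotent, where both
coordinates have order exactly `6`, and there is a zero of the form `(t⁷, t²)` with `t ∈ 𝔽₁₂₈`,
where both have order `127`.
-/

open Polynomial

section OrderOf

theorem isCoprime_pow_sub_one {A : Type*} [CommRing A] {a b : ℕ} (hab : a.Coprime b) {z : A}
    (hz : IsUnit (z - 1)) : IsCoprime (z ^ a - 1) (z ^ b - 1) := by
  rw [← Ideal.isCoprime_span_singleton_iff, Ideal.isCoprime_iff_sup_eq, ← Ideal.span_insert]
  set I := Ideal.span {z ^ a - 1, z ^ b - 1}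
  have pow_eq_one {n : ℕ} (hn : z ^ n - 1 ∈ I) : Ideal.Quotient.mk I z ^ n = 1 := by
    rwa [← map_pow, ← map_one (Ideal.Quotient.mk I), Ideal.Quotient.eq]
  have ha := pow_eq_one (n := a) (Ideal.subset_span (by simp))
  have hb := pow_eq_one (n := b) (Ideal.subset_span (by simp))
  have hmk : Ideal.Quotient.mk I z = Ideal.Quotient.mk I 1 := by
    simpa [hab.gcd_eq_one] using pow_gcd_eq_one.mpr ⟨ha, hb⟩
  exact Ideal.eq_top_of_isUnit_mem _ (Ideal.Quotient.eq.mp hmk) hz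

theorem pow_mul_eq_one_of_pow_sub_one_mul_eq_zero {A : Type*} [CommRing A] {a b : ℕ}
    (hab : a.Coprime b) {z : A} (hz : IsUnit (z - 1)) (h : (z ^ a - 1) * (z ^ b - 1) = 0) :
    z ^ (a * b) = 1 := by
  have ha : z ^ a - 1 ∣ z ^ (a * b) - 1 := by
    simpa [pow_mul] using sub_dvd_pow_sub_pow (z ^ a) 1 b
  have hb : z ^ b - 1 ∣ z ^ (a * b) - 1 := by
    simpa [pow_mul'] using sub_dvd_pow_sub_pow (z ^ b) 1 a
  exact sub_eq_zero.mp (zero_dvd_iff.mp (h ▸ (isCoprime_pow_sub_one hab hz).mul_dvd ha hb))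

theorem orderOf_eq_mul_of_orderOf_map {M N P : Type*} [Monoid M] [Monoid N] [Monoid P] {z : M}
    {a b : ℕ} (hab : a.Coprime b) (φ : M →* N) (ψ : M →* P) (hφ : orderOf (φ z) = a)
    (hψ : orderOf (ψ z) = b) (hz : z ^ (a * b) = 1) : orderOf z = a * b :=
  Nat.dvd_antisymm (orderOf_dvd_of_pow_eq_one hz)
    (hab.mul_dvd_of_dvd_of_dvd (hφ ▸ orderOf_map_dvd φ z) (hψ ▸ orderOf_map_dvd ψ z))

theorem isLeast_orderOf {M : Type*} [Monoid M] {z : M} (hz : 0 < orderOf z) :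
    IsLeast {n : ℕ | 0 < n ∧ z ^ n = 1} (orderOf z) :=
  ⟨⟨hz, pow_orderOf_eq_one z⟩, fun _ hn => orderOf_le_of_pow_eq_one hn.1 hn.2⟩

end OrderOf

section AlgebraZModTwo

theorem two_eq_zero_of_algebra_zmod_two (A : Type*) [Ring A] [Algebra (ZMod 2) A] :
    (2 : A) = 0 := by
  rw [← map_ofNat (algebraMap (ZMod 2) A) 2]
  exact map_zero _

theorem sub_eq_add_of_algebra_zmod_two {A : Type*} [Ring A] [Algebra (ZMod 2) A] (a b : A) :
    a - b = a + b := by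
  rw [sub_eq_iff_eq_add, add_assoc, ← two_mul, two_eq_zero_of_algebra_zmod_two, zero_mul, add_zero]

theorem orderOf_eq_six_of_quartic {A : Type*} [CommRing A] [Algebra (ZMod 2) A] {z : A}
    (hz : 1 + z ^ 2 + z ^ 4 = 0) (hne : 1 + z + z ^ 2 ≠ 0) : orderOf z = 6 := by
  have h2 := two_eq_zero_of_algebra_zmod_two A
  refine orderOf_eq_of_pow_and_pow_div_prime (by norm_num)
    (by linear_combination (z ^ 2 - 1) * hz) fun p hp hdvd hpow => hne ?_
  have hp23 : p = 2 ∨ p = 3 := by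
    rwa [show 6 = 2 * 3 by rfl, hp.dvd_mul, Nat.prime_dvd_prime_iff_eq hp Nat.prime_two,
      Nat.prime_dvd_prime_iff_eq hp Nat.prime_three] at hdvd
  rcases hp23 with rfl | rfl
  · have hcube : z ^ 3 = 1 := hpow
    linear_combination hz - z * hcube
  · have hsq : z ^ 2 = 1 := hpow
    have hone : (1 : A) = 0 := by linear_combination hz - (z ^ 2 + 2) * hsq - h2
    linear_combination (1 + z + z ^ 2) * hone

end AlgebraZModTwo

section MonomialRelations

variable {A : Type*} [CommRing A] {c x y : A}

theorem mul_pow_eq_mul_pow_of_mul_eq_mul (h : c * x = c * y) (n : ℕ) : c * x ^ n = c * y ^ n := by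
  obtain ⟨d, hd⟩ := sub_dvd_pow_sub_pow x y n
  linear_combination c * hd + d * h

-- The exponent vectors `(-2, 7)` and `(17, 4)` span a sublattice of `ℤ²` of index `127`.
theorem mul_pow_127_eq_self (h₁ : c * y ^ 7 = c * x ^ 2) (h₂ : c * (x ^ 17 * y ^ 4) = c) :
    c * x ^ 127 = c ∧ c * y ^ 127 = c := by
  have h₂' : c * (x ^ 17 * y ^ 4) = c * 1 := by rw [h₂, mul_one]
  have hpow₁ := mul_pow_eq_mul_pow_of_mul_eq_mul h₁
  have hpow₂ := mul_pow_eq_mul_pow_of_mul_eq_mul h₂'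
  constructor
  · linear_combination hpow₂ 7 - x ^ 119 * hpow₁ 4
  · linear_combination hpow₂ 2 + y ^ 8 * hpow₁ 17

end MonomialRelations

/-- The pair `(x, y)` is a common zero of `f = 1 + x + x⁻¹y⁻³` and `g = 1 + y + y⁻¹x³`, in a ring
meant to be an `𝔽₂`-algebra. Denominators are cleared: the equations are `x y³ f = 0`, solved for
its constant term `1`, and `y g = 0`; they force `x` and `y` to be units. -/
structure IsCodePoint {A : Type*} [CommRing A] (x y : A) : Prop where
  f_eq : x * y ^ 3 * (1 + x) = 1
  g_eq : y ^ 2 + y + x ^ 3 = 0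

namespace IsCodePoint

variable {A : Type*} [CommRing A] {x y : A}

theorem isUnit_x (h : IsCodePoint x y) : IsUnit x :=
  .of_mul_eq_one (y ^ 3 * (1 + x)) (by linear_combination h.f_eq)

theorem isUnit_y (h : IsCodePoint x y) : IsUnit y :=
  .of_mul_eq_one (x * y ^ 2 * (1 + x)) (by linear_combination h.f_eq)

theorem isUnit_one_add_x (h : IsCodePoint x y) : IsUnit (1 + x) :=
  .of_mul_eq_one (x * y ^ 3) (by linear_combination h.f_eq)

theorem isUnit_one_add_y (h : IsCodePoint x y) : IsUnit (1 + y) := by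
  have hmul : y * (1 + y) = -x ^ 3 := by linear_combination h.g_eq
  exact isUnit_of_mul_isUnit_right (hmul ▸ (h.isUnit_x.pow 3).neg)

variable [Algebra (ZMod 2) A]

theorem isUnit_x_sub_one (h : IsCodePoint x y) : IsUnit (x - 1) := by
  rw [sub_eq_add_of_algebra_zmod_two, add_comm]
  exact h.isUnit_one_add_x

theorem isUnit_y_sub_one (h : IsCodePoint x y) : IsUnit (y - 1) := by
  rw [sub_eq_add_of_algebra_zmod_two, add_comm]
  exact h.isUnit_one_add_y

theorem one_add_y_add_sq (h : IsCodePoint x y) : 1 + y + y ^ 2 = (1 + x) * (1 + x + x ^ 2) := by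
  linear_combination h.g_eq - (x + x ^ 2 + x ^ 3) * two_eq_zero_of_algebra_zmod_two A

theorem quartic_y (h : IsCodePoint x y) :
    1 + y ^ 2 + y ^ 4 = (1 + x ^ 2) * (1 + x ^ 2 + x ^ 4) := by
  have h2 := two_eq_zero_of_algebra_zmod_two A
  have hsq : (1 + y + y ^ 2) ^ 2 = ((1 + x) * (1 + x + x ^ 2)) ^ 2 := by rw [h.one_add_y_add_sq]
  grind

theorem orderOf_eq_six (h : IsCodePoint x y) (hq : 1 + x ^ 2 + x ^ 4 = 0)
    (hne : 1 + x + x ^ 2 ≠ 0) : orderOf x = 6 ∧ orderOf y = 6 := by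
  refine ⟨orderOf_eq_six_of_quartic hq hne, orderOf_eq_six_of_quartic ?_ ?_⟩
  · rw [h.quartic_y, hq, mul_zero]
  · rwa [h.one_add_y_add_sq, Ne, h.isUnit_one_add_x.mul_right_eq_zero]

theorem quartic_mul_pow_127 (h : IsCodePoint x y) :
    (1 + x ^ 2 + x ^ 4) * x ^ 127 = 1 + x ^ 2 + x ^ 4 ∧
      (1 + x ^ 2 + x ^ 4) * y ^ 127 = 1 + x ^ 2 + x ^ 4 := by
  have h2 := two_eq_zero_of_algebra_zmod_two A
  obtain ⟨hf, hg⟩ := h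
  have h₁ : (1 + x ^ 2 + x ^ 4) * y ^ 7 = (1 + x ^ 2 + x ^ 4) * x ^ 2 := by grind
  have h₂ : (1 + x ^ 2 + x ^ 4) * (x ^ 17 * y ^ 4) = 1 + x ^ 2 + x ^ 4 := by grind
  exact mul_pow_127_eq_self h₁ h₂

theorem orderOf_eq_127 [Nontrivial A] (h : IsCodePoint x y) (hq : IsUnit (1 + x ^ 2 + x ^ 4)) :
    orderOf x = 127 ∧ orderOf y = 127 := by
  have : Fact (Nat.Prime 127) := ⟨by norm_num⟩
  obtain ⟨hx, hy⟩ := h.quartic_mul_pow_127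
  exact ⟨orderOf_eq_prime (hq.mul_eq_left.mp hx) (sub_ne_zero.mp h.isUnit_x_sub_one.ne_zero),
    orderOf_eq_prime (hq.mul_eq_left.mp hy) (sub_ne_zero.mp h.isUnit_y_sub_one.ne_zero)⟩

theorem x_pow_eq_one (h : IsCodePoint x y) : x ^ (6 * 127) = 1 := by
  refine pow_mul_eq_one_of_pow_sub_one_mul_eq_zero (by norm_num) h.isUnit_x_sub_one ?_
  linear_combination (x ^ 2 - 1) * h.quartic_mul_pow_127.1

theorem y_pow_eq_one (h : IsCodePoint x y) : y ^ (6 * 127) = 1 := by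
  refine pow_mul_eq_one_of_pow_sub_one_mul_eq_zero (by norm_num) h.isUnit_y_sub_one ?_
  linear_combination (y ^ 2 - 1) * (y ^ 127 - 1) * h.quartic_y +
    (y ^ 2 - 1) * (1 + x ^ 2) * h.quartic_mul_pow_127.2

end IsCodePoint

section Points

/-- The polynomial `1 + x² + x⁴ = (1 + x + x²)²` over `𝔽₂`, whose root generates the non-reduced
ring in which the zero of `f` and `g` with coordinates of order `6` is found. -/
def quartic : (ZMod 2)[X] := 1 + X ^ 2 + X ^ 4

/-- The minimal polynomial over `𝔽₂` of the `t ∈ 𝔽₁₂₈` for which `(t⁷, t²)` is a common zero of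
`f` and `g`. -/
def septic : (ZMod 2)[X] := 1 + X + X ^ 2 + X ^ 4 + X ^ 5 + X ^ 6 + X ^ 7

theorem root_quartic_eq :
    1 + AdjoinRoot.root quartic ^ 2 + AdjoinRoot.root quartic ^ 4 = 0 := by
  have h : AdjoinRoot.mk quartic (1 + X ^ 2 + X ^ 4) = 0 := AdjoinRoot.mk_self
  simpa using h

theorem one_add_root_quartic_add_sq_ne_zero :
    1 + AdjoinRoot.root quartic + AdjoinRoot.root quartic ^ 2 ≠ 0 := by
  have hquartic : quartic.natDegree = 4 := by unfold quartic; compute_degree!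
  have hmonic : quartic.Monic := by unfold quartic; monicity!
  have hdeg : (1 + X + X ^ 2 : (ZMod 2)[X]).natDegree = 2 := by compute_degree!
  have hne : (1 + X + X ^ 2 : (ZMod 2)[X]) ≠ 0 := ne_zero_of_natDegree_gt (n := 1) (by omega)
  simpa using AdjoinRoot.mk_ne_zero_of_natDegree_lt hmonic hne (by omega)

theorem isCodePoint_root_quartic :
    IsCodePoint (AdjoinRoot.root quartic)
      (1 + AdjoinRoot.root quartic ^ 2 + AdjoinRoot.root quartic ^ 3) := by
  have h2 := two_eq_zero_of_algebra_zmod_two (AdjoinRoot quartic)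
  have hroot := root_quartic_eq
  constructor <;> grind

instance : Nontrivial (AdjoinRoot septic) := by
  refine AdjoinRoot.nontrivial septic (natDegree_pos_iff_degree_pos.mp ?_).ne'
  have hseptic : septic.natDegree = 7 := by unfold septic; compute_degree!
  omega

theorem root_septic_eq :
    1 + AdjoinRoot.root septic + AdjoinRoot.root septic ^ 2 + AdjoinRoot.root septic ^ 4 +
      AdjoinRoot.root septic ^ 5 + AdjoinRoot.root septic ^ 6 + AdjoinRoot.root septic ^ 7 = 0 := by
  have h : AdjoinRoot.mk septic (1 + X + X ^ 2 + X ^ 4 + X ^ 5 + X ^ 6 + X ^ 7) = 0 :=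
    AdjoinRoot.mk_self
  simpa using h

theorem isCodePoint_root_septic :
    IsCodePoint (AdjoinRoot.root septic ^ 7) (AdjoinRoot.root septic ^ 2) := by
  have h2 := two_eq_zero_of_algebra_zmod_two (AdjoinRoot septic)
  have hroot := root_septic_eq
  constructor <;> grind

theorem isUnit_quartic_root_septic :
    IsUnit (1 + (AdjoinRoot.root septic ^ 7) ^ 2 + (AdjoinRoot.root septic ^ 7) ^ 4) := by
  have h2 := two_eq_zero_of_algebra_zmod_two (AdjoinRoot septic)
  have hroot := root_septic_eq
  have hmonomial : 1 + (AdjoinRoot.root septic ^ 7) ^ 2 + (AdjoinRoot.root septic ^ 7) ^ 4 =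
      (AdjoinRoot.root septic ^ 7) ^ 3 * (AdjoinRoot.root septic ^ 2) ^ 4 := by
    grind
  rw [hmonomial]
  exact (isCodePoint_root_septic.isUnit_x.pow 3).mul (isCodePoint_root_septic.isUnit_y.pow 4)

end Points

section LaurentPolynomials

theorem mono_mul_mono (i j k l : ℤ) : mono i j * mono k l = mono (i + k) (j + l) := by
  simp [mono, AddMonoidAlgebra.single_mul_single]

theorem mono_pow (i j : ℤ) (n : ℕ) : mono i j ^ n = mono (n * i) (n * j) := by
  simp [mono, AddMonoidAlgebra.single_pow]

theorem mono_zero_zero : mono 0 0 = 1 := rfl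

theorem isUnit_mono (i j : ℤ) : IsUnit (mono i j) :=
  .of_mul_eq_one (mono (-i) (-j)) (by
    rw [mono_mul_mono, add_neg_cancel, add_neg_cancel, mono_zero_zero])

theorem mono_mul_f : mono 1 3 * (1 + mono 1 0 + mono (-1) (-3)) =
    mono 1 0 * mono 0 1 ^ 3 * (1 + mono 1 0) + 1 := by
  simp [mul_add, mono_mul_mono, mono_pow, mono_zero_zero]

theorem mono_mul_g : mono 0 1 * (1 + mono 0 1 + mono 3 (-1)) =
    mono 0 1 ^ 2 + mono 0 1 + mono 1 0 ^ 3 := by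
  simp [mul_add, mono_mul_mono, mono_pow, add_comm]

/-- The ideal `(f, g)`, generated by the two polynomials of the code. -/
def stabilizerIdeal : Ideal LaurentR :=
  Ideal.span {1 + mono 1 0 + mono (-1) (-3), 1 + mono 0 1 + mono 3 (-1)}

variable {A : Type*} [CommRing A] [Algebra (ZMod 2) A]

theorem stabilizerIdeal_le_ker_iff (φ : LaurentR →ₐ[ZMod 2] A) :
    stabilizerIdeal ≤ RingHom.ker φ ↔ IsCodePoint (φ (mono 1 0)) (φ (mono 0 1)) := by
  have hf : φ (1 + mono 1 0 + mono (-1) (-3)) = 0 ↔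
      φ (mono 1 0) * φ (mono 0 1) ^ 3 * (1 + φ (mono 1 0)) = 1 := by
    rw [← ((isUnit_mono 1 3).map φ).mul_right_eq_zero, ← map_mul, mono_mul_f,
      ← sub_eq_zero (b := 1), sub_eq_add_of_algebra_zmod_two]
    simp only [map_add, map_mul, map_pow, map_one]
  have hg : φ (1 + mono 0 1 + mono 3 (-1)) = 0 ↔
      φ (mono 0 1) ^ 2 + φ (mono 0 1) + φ (mono 1 0) ^ 3 = 0 := by
    rw [← ((isUnit_mono 0 1).map φ).mul_right_eq_zero, ← map_mul, mono_mul_g]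
    simp only [map_add, map_pow]
  rw [stabilizerIdeal, Ideal.span_le, Set.pair_subset_iff, SetLike.mem_coe, SetLike.mem_coe,
    RingHom.mem_ker, RingHom.mem_ker, hf, hg]
  exact ⟨fun h => ⟨h.1, h.2⟩, fun h => ⟨h.f_eq, h.g_eq⟩⟩

/-- Evaluation of Laurent polynomials at a pair of units. -/
def evalUnits (u v : Aˣ) : LaurentR →ₐ[ZMod 2] A :=
  AddMonoidAlgebra.lift (ZMod 2) A (ℤ × ℤ) <| (Units.coeHom A).comp <|
    ((zpowersHom Aˣ u).coprod (zpowersHom Aˣ v)).comp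
      (MulEquiv.prodMultiplicative ℤ ℤ).toMonoidHom

theorem evalUnits_mono (u v : Aˣ) (i j : ℤ) :
    evalUnits u v (mono i j) = ((u ^ i * v ^ j : Aˣ) : A) := by
  simp [evalUnits, mono, AddMonoidAlgebra.lift_single, MulEquiv.prodMultiplicative]

/-- The class of the monomial `x` in the quotient by `(f, g)`. -/
def xBar : LaurentR ⧸ stabilizerIdeal := Ideal.Quotient.mk _ (mono 1 0)

/-- The class of the monomial `y` in the quotient by `(f, g)`. -/
def yBar : LaurentR ⧸ stabilizerIdeal := Ideal.Quotient.mk _ (mono 0 1)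

theorem isCodePoint_xBar_yBar : IsCodePoint xBar yBar :=
  (stabilizerIdeal_le_ker_iff (Ideal.Quotient.mkₐ (ZMod 2) stabilizerIdeal)).mp
    (Ideal.Quotient.mkₐ_ker (ZMod 2) stabilizerIdeal).ge

theorem IsCodePoint.exists_ringHom {x y : A} (h : IsCodePoint x y) :
    ∃ φ : LaurentR ⧸ stabilizerIdeal →+* A, φ xBar = x ∧ φ yBar = y := by
  obtain ⟨u, rfl⟩ := h.isUnit_x
  obtain ⟨v, rfl⟩ := h.isUnit_y
  have hx : evalUnits u v (mono 1 0) = u := by simp [evalUnits_mono]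
  have hy : evalUnits u v (mono 0 1) = v := by simp [evalUnits_mono]
  have hker : stabilizerIdeal ≤ RingHom.ker (evalUnits u v) := by
    rwa [stabilizerIdeal_le_ker_iff, hx, hy]
  exact ⟨Ideal.Quotient.lift _ (evalUnits u v : LaurentR →+* A) hker, hx, hy⟩

end LaurentPolynomials

section Periods

theorem orderOf_xBar_yBar : orderOf xBar = 6 * 127 ∧ orderOf yBar = 6 * 127 := by
  obtain ⟨φ, hφx, hφy⟩ := isCodePoint_root_quartic.exists_ringHom
  obtain ⟨ψ, hψx, hψy⟩ := isCodePoint_root_septic.exists_ringHom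
  obtain ⟨hx6, hy6⟩ := isCodePoint_root_quartic.orderOf_eq_six root_quartic_eq
    one_add_root_quartic_add_sq_ne_zero
  obtain ⟨hx127, hy127⟩ := isCodePoint_root_septic.orderOf_eq_127 isUnit_quartic_root_septic
  rw [← hφx] at hx6
  rw [← hφy] at hy6
  rw [← hψx] at hx127
  rw [← hψy] at hy127
  exact ⟨orderOf_eq_mul_of_orderOf_map (by norm_num) φ.toMonoidHom ψ.toMonoidHom hx6 hx127
      isCodePoint_xBar_yBar.x_pow_eq_one,
    orderOf_eq_mul_of_orderOf_map (by norm_num) φ.toMonoidHom ψ.toMonoidHom hy6 hy127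
      isCodePoint_xBar_yBar.y_pow_eq_one⟩

theorem mono_sub_one_mem_iff (I : Ideal LaurentR) (i j : ℤ) (n : ℕ) :
    mono (n * i) (n * j) - 1 ∈ I ↔ Ideal.Quotient.mk I (mono i j) ^ n = 1 := by
  rw [← map_pow, mono_pow, ← map_one (Ideal.Quotient.mk I), Ideal.Quotient.eq]

theorem isLeast_period (I : Ideal LaurentR) (i j : ℤ)
    (h : 0 < orderOf (Ideal.Quotient.mk I (mono i j))) :
    IsLeast {n : ℕ | 0 < n ∧ mono (n * i) (n * j) - 1 ∈ I}
      (orderOf (Ideal.Quotient.mk I (mono i j))) := by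
  simpa only [mono_sub_one_mem_iff] using isLeast_orderOf h

end Periods

/-- For the BB(1̄, 1̄, 3, 3̄) code, with `f = 1 + x + x⁻¹y⁻³` and `g = 1 + y + y⁻¹x³`, the
anyon periods are `ℓ₀ = m₀ = 762`: `762` is the least positive integer `n` with
`x^n − 1 ∈ (f, g)`, and likewise the least positive integer `n` with `y^n − 1 ∈ (f, g)`. -/
theorem bb_1133bar_anyon_periods :
    IsLeast {n : ℕ | 0 < n ∧ mono (n : ℤ) 0 - 1 ∈
      Ideal.span ({1 + mono 1 0 + mono (-1) (-3),
        1 + mono 0 1 + mono 3 (-1)} : Set LaurentR)} 762 ∧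
    IsLeast {n : ℕ | 0 < n ∧ mono 0 (n : ℤ) - 1 ∈
      Ideal.span ({1 + mono 1 0 + mono (-1) (-3),
        1 + mono 0 1 + mono 3 (-1)} : Set LaurentR)} 762 := by
  have hx : orderOf (Ideal.Quotient.mk stabilizerIdeal (mono 1 0)) = 762 := orderOf_xBar_yBar.1
  have hy : orderOf (Ideal.Quotient.mk stabilizerIdeal (mono 0 1)) = 762 := orderOf_xBar_yBar.2
  have hx_least := isLeast_period stabilizerIdeal 1 0 (by rw [hx]; norm_num)
  have hy_least := isLeast_period stabilizerIdeal 0 1 (by rw [hy]; norm_num)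
  simp only [hx, mul_one, mul_zero] at hx_least
  simp only [hy, mul_one, mul_zero] at hy_least
  exact ⟨hx_least, hy_least⟩
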